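/- Let d be a positive integer, M ∈ ℂ^{d×d} a positive semi-definite Hermitian matrix of rank r ≤ d with eigenvalues λ₁ ≥ … ≥ λ_d, c ∈ ℝ, and a ∈ ℂ^d. Let A be the (d+1)×(d+1) Hermitian bordered matrix A = [[c, a*], [a, M]]. Then λ_{r+1}(A) ≥ min(c, λ_r) − ‖a‖₂. -/

import Mathlib

open scoped ComplexOrder

/-!
Write `A = [[c, a*], [a, M]]`. By the Courant–Fischer principle, the number of eigenvalues of `A`
that are at least `t` is the largest dimension of a subspace on which `⟪z, A z⟫ ≥ t ‖z‖²`. Let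
`s ≤ c`, and let `V` be spanned by the eigenvectors of `M` with eigenvalue at least `s`. For
`z = (x, y)` with `y ∈ V`,
`⟪z, A z⟫ = c |x|² + 2 Re (conj x * ⟪a, y⟫) + ⟪y, M y⟫`
`        ≥ s (|x|² + ‖y‖²) - 2 |x| ‖a‖ ‖y‖ ≥ (s - ‖a‖) ‖z‖²`,
and these `z` form a space of dimension `dim V + 1`. So `A` has at least one more eigenvalue
`≥ s - ‖a‖` than `M` has eigenvalues `≥ s`.
-/

open Module (finrank)
open Submodule (span)
open RCLike (re)
open Matrix (toEuclideanLin)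
open scoped InnerProductSpace ComplexConjugate

variable {𝕜 : Type*} [RCLike 𝕜]

section LinearAlgebra

variable {K V V' ι : Type*} [DivisionRing K] [AddCommGroup V] [Module K V]
  [AddCommGroup V'] [Module K V']

lemma finrank_span_image_eq_card {v : ι → V} (hv : LinearIndependent K v) (s : Finset ι) :
    finrank K (span K (v '' s)) = s.card := by
  rw [Set.image_eq_range]
  exact (finrank_span_eq_card (hv.comp _ Subtype.val_injective)).trans (Fintype.card_coe s)

lemma finrank_comap_of_surjective [FiniteDimensional K V] {f : V →ₗ[K] V'}
    (hf : Function.Surjective f) (p : Submodule K V') :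
    finrank K (p.comap f) = finrank K p + finrank K (LinearMap.ker f) := by
  have hker : LinearMap.ker f ≤ p.comap f := Submodule.comap_mono bot_le
  rw [← LinearMap.finrank_range_add_finrank_ker (f.domRestrict (p.comap f)),
    LinearMap.range_domRestrict, Submodule.map_comap_eq_of_surjective hf,
    LinearMap.ker_domRestrict, (Submodule.comapSubtypeEquivOfLe hker).finrank_eq]

end LinearAlgebra

lemma le_apply_iff_lt_card_of_antitone {ι α : Type*} [Fintype ι] [LinearOrder α] {d : ℕ}
    {f : ι → α} {μ : Fin d → α} (hμ : Antitone μ) {e : Fin d ≃ ι} (he : ∀ i, μ i = f (e i))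
    (t : α) (k : Fin d) : t ≤ μ k ↔ (k : ℕ) < Finset.card {i | t ≤ f i} := by
  have hcard : Finset.card {i | t ≤ f i} = Finset.card {i | t ≤ μ i} :=
    (Finset.card_equiv e fun i => by simp [he]).symm
  rw [hcard]
  constructor
  · intro hk
    rw [← Nat.succ_le_iff, Nat.succ_eq_add_one, ← Fin.card_Iic]
    exact Finset.card_le_card fun i hi =>
      (Finset.mem_filter_univ i).2 (hk.trans (hμ (Finset.mem_Iic.1 hi)))
  · contrapose!
    intro hk
    rw [← Fin.card_Iio]
    refine Finset.card_le_card fun i hi => Finset.mem_Iio.2 (lt_of_not_ge fun hki => ?_)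
    exact ((Finset.mem_filter_univ i).1 hi).not_gt ((hμ hki).trans_lt hk)

section CourantFischer

variable {E ι : Type*} [NormedAddCommGroup E] [InnerProductSpace 𝕜 E]

lemma inner_eq_zero_of_mem_span_image {v : ι → E} (hv : Orthonormal 𝕜 v) {s : Set ι}
    {x : E} (hx : x ∈ span 𝕜 (v '' s)) {i : ι} (hi : i ∉ s) : ⟪v i, x⟫_𝕜 = 0 := by
  obtain ⟨l, hl, rfl⟩ := (Finsupp.mem_span_image_iff_linearCombination 𝕜).1 hx
  exact inner_eq_zero_symm.1 (hv.inner_finsupp_eq_zero hi hl)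

variable [Fintype ι] (b : OrthonormalBasis ι 𝕜 E) {T : E →ₗ[𝕜] E} {μ : ι → ℝ}

lemma inner_map_eq_eigenvalue_mul {z : ι → 𝕜} (hT : ∀ i, T (b i) = z i • b i) (i : ι) (x : E) :
    ⟪b i, T x⟫_𝕜 = z i * ⟪b i, x⟫_𝕜 := by
  classical
  conv_lhs => rw [← b.sum_repr' x]
  simp [hT, inner_sum, inner_smul_right, orthonormal_iff_ite.1 b.orthonormal, mul_comm]

lemma re_inner_map_self_sub_eq_sum (hT : ∀ i, T (b i) = (μ i : 𝕜) • b i) (t : ℝ) (x : E) :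
    re ⟪x, T x⟫_𝕜 - t * ‖x‖ ^ 2 = ∑ i, (μ i - t) * ‖⟪b i, x⟫_𝕜‖ ^ 2 := by
  have hterm (i : ι) : re (⟪x, b i⟫_𝕜 * ⟪b i, T x⟫_𝕜) = μ i * ‖⟪b i, x⟫_𝕜‖ ^ 2 := by
    rw [inner_map_eq_eigenvalue_mul b hT, mul_left_comm, RCLike.re_ofReal_mul,
      inner_mul_symm_re_eq_norm, norm_mul, norm_inner_symm x, sq]
  rw [← b.sum_inner_mul_inner x (T x), ← b.sum_sq_norm_inner_right x, map_sum, Finset.mul_sum]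
  simp only [hterm, sub_mul, Finset.sum_sub_distrib]

lemma mul_norm_sq_le_re_inner_map_self (hT : ∀ i, T (b i) = (μ i : 𝕜) • b i) {t : ℝ} {x : E}
    (hx : x ∈ span 𝕜 (b '' {i | t ≤ μ i})) : t * ‖x‖ ^ 2 ≤ re ⟪x, T x⟫_𝕜 := by
  rw [← sub_nonneg, re_inner_map_self_sub_eq_sum b hT]
  refine Finset.sum_nonneg fun i _ => ?_
  by_cases hi : t ≤ μ i
  · exact mul_nonneg (sub_nonneg.2 hi) (sq_nonneg _)
  · simp [inner_eq_zero_of_mem_span_image b.orthonormal hx hi]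

lemma re_inner_map_self_lt_mul_norm_sq (hT : ∀ i, T (b i) = (μ i : 𝕜) • b i) {t : ℝ} {x : E}
    (hx : x ∈ span 𝕜 (b '' {i | μ i < t})) (hx0 : x ≠ 0) : re ⟪x, T x⟫_𝕜 < t * ‖x‖ ^ 2 := by
  have hzero {i : ι} (hi : ¬ μ i < t) : ⟪b i, x⟫_𝕜 = 0 :=
    inner_eq_zero_of_mem_span_image b.orthonormal hx hi
  obtain ⟨j, hj⟩ : ∃ j, ⟪b j, x⟫_𝕜 ≠ 0 := by
    contrapose! hx0
    rw [← b.sum_repr' x]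
    simp [hx0]
  have hjt : μ j < t := not_not.1 (mt hzero hj)
  rw [← sub_neg, re_inner_map_self_sub_eq_sum b hT]
  refine Finset.sum_neg' (fun i _ => ?_) ⟨j, Finset.mem_univ j, ?_⟩
  · by_cases hi : μ i < t
    · exact mul_nonpos_of_nonpos_of_nonneg (sub_nonpos.2 hi.le) (sq_nonneg _)
    · simp [hzero hi]
  · exact mul_neg_of_neg_of_pos (sub_neg.2 hjt) (by positivity)

theorem finrank_le_card_eigenvalues_ge (hT : ∀ i, T (b i) = (μ i : 𝕜) • b i) {t : ℝ}
    {W : Submodule 𝕜 E} (hW : ∀ x ∈ W, t * ‖x‖ ^ 2 ≤ re ⟪x, T x⟫_𝕜) :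
    finrank 𝕜 W ≤ Finset.card {i | t ≤ μ i} := by
  have := b.toBasis.finiteDimensional_of_finite
  set U := span 𝕜 (b '' {i | μ i < t})
  have hdisj : Disjoint W U := Submodule.disjoint_def.2 fun x hxW hxU => by
    by_contra hx0
    exact (re_inner_map_self_lt_mul_norm_sq b hT hxU hx0).not_ge (hW x hxW)
  have hUdim : finrank 𝕜 U = Finset.card {i | μ i < t} := by
    rw [← finrank_span_image_eq_card b.orthonormal.linearIndependent, Finset.coe_filter_univ]
  have hle := Submodule.finrank_add_finrank_le_of_disjoint hdisj
  have hsplit := Finset.card_filter_add_card_filter_not (s := Finset.univ) (fun i => t ≤ μ i)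
  simp only [not_le, Finset.card_univ] at hsplit
  rw [hUdim, Module.finrank_eq_card_basis b.toBasis] at hle
  omega

end CourantFischer

lemma neg_norm_mul_add_sq_le_two_mul_re_conj_mul_inner {E : Type*} [SeminormedAddCommGroup E]
    [InnerProductSpace 𝕜 E] (x : 𝕜) (a y : E) :
    -(‖a‖ * (‖x‖ ^ 2 + ‖y‖ ^ 2)) ≤ 2 * re (conj x * ⟪a, y⟫_𝕜) := by
  have hcs : ‖conj x * ⟪a, y⟫_𝕜‖ ≤ ‖x‖ * (‖a‖ * ‖y‖) := by
    rw [norm_mul, RCLike.norm_conj]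
    gcongr
    exact norm_inner_le_norm a y
  have hre := (abs_le.1 (RCLike.abs_re_le_norm (conj x * ⟪a, y⟫_𝕜))).1
  have hamgm := mul_le_mul_of_nonneg_left (two_mul_le_add_sq ‖x‖ ‖y‖) (norm_nonneg a)
  linarith

section Bordered

variable {n : Type*}

/-- The bordered matrix `[[c, a*], [a, M]]`; the index `Sum.inl ()` is that of the border. -/
def borderedMatrix (c : ℝ) (a : EuclideanSpace 𝕜 n) (M : Matrix n n 𝕜) :
    Matrix (Unit ⊕ n) (Unit ⊕ n) 𝕜 :=
  Matrix.fromBlocks (Matrix.of fun _ _ => (c : 𝕜)) (Matrix.of fun _ j => star (a j))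
    (Matrix.of fun i _ => a i) M

/-- The component `y` of `z = (x, y)` in the decomposition `𝕜 × 𝕜ⁿ` of the space on which a bordered
matrix acts. The component `x` is written `z (Sum.inl ())`. -/
def lowerPart : EuclideanSpace 𝕜 (Unit ⊕ n) →ₗ[𝕜] EuclideanSpace 𝕜 n where
  toFun z := WithLp.toLp 2 fun i => z (Sum.inr i)
  map_add' _ _ := rfl
  map_smul' _ _ := rfl

lemma lowerPart_apply (z : EuclideanSpace 𝕜 (Unit ⊕ n)) (i : n) :
    lowerPart z i = z (Sum.inr i) := rfl

lemma lowerPart_surjective :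
    Function.Surjective (lowerPart : EuclideanSpace 𝕜 (Unit ⊕ n) →ₗ[𝕜] EuclideanSpace 𝕜 n) :=
  fun y => ⟨WithLp.toLp 2 (Sum.elim 0 y), rfl⟩

lemma finrank_comap_lowerPart [Finite n] (p : Submodule 𝕜 (EuclideanSpace 𝕜 n)) :
    finrank 𝕜 (p.comap lowerPart) = finrank 𝕜 p + 1 := by
  have := Fintype.ofFinite n
  have htop := finrank_comap_of_surjective (lowerPart_surjective (𝕜 := 𝕜) (n := n)) ⊤
  rw [Submodule.comap_top, finrank_top, finrank_top, finrank_euclideanSpace,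
    finrank_euclideanSpace, Fintype.card_sum, Fintype.card_unit] at htop
  rw [finrank_comap_of_surjective lowerPart_surjective]
  omega

variable [Fintype n]

lemma inner_eq_mul_add_inner_lowerPart (z w : EuclideanSpace 𝕜 (Unit ⊕ n)) :
    ⟪z, w⟫_𝕜 = conj (z (Sum.inl ())) * w (Sum.inl ()) + ⟪lowerPart z, lowerPart w⟫_𝕜 := by
  simp [PiLp.inner_apply, lowerPart_apply, mul_comm]

lemma norm_sq_eq_add_norm_sq_lowerPart (z : EuclideanSpace 𝕜 (Unit ⊕ n)) :
    ‖z‖ ^ 2 = ‖z (Sum.inl ())‖ ^ 2 + ‖lowerPart z‖ ^ 2 := by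
  simp [EuclideanSpace.norm_sq_eq, lowerPart_apply]

variable [DecidableEq n]

lemma toEuclideanLin_borderedMatrix_inl (c : ℝ) (a : EuclideanSpace 𝕜 n) (M : Matrix n n 𝕜)
    (z : EuclideanSpace 𝕜 (Unit ⊕ n)) :
    toEuclideanLin (borderedMatrix c a M) z (Sum.inl ())
      = c * z (Sum.inl ()) + ⟪a, lowerPart z⟫_𝕜 := by
  simp [borderedMatrix, Matrix.toLpLin_apply, Matrix.mulVec, dotProduct, PiLp.inner_apply,
    lowerPart_apply, mul_comm]

lemma lowerPart_toEuclideanLin_borderedMatrix (c : ℝ) (a : EuclideanSpace 𝕜 n) (M : Matrix n n 𝕜)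
    (z : EuclideanSpace 𝕜 (Unit ⊕ n)) :
    lowerPart (toEuclideanLin (borderedMatrix c a M) z)
      = z (Sum.inl ()) • a + toEuclideanLin M (lowerPart z) := by
  ext i
  simp [borderedMatrix, Matrix.toLpLin_apply, Matrix.mulVec, dotProduct, lowerPart_apply, mul_comm]

lemma re_inner_borderedMatrix (c : ℝ) (a : EuclideanSpace 𝕜 n) (M : Matrix n n 𝕜)
    (z : EuclideanSpace 𝕜 (Unit ⊕ n)) :
    re ⟪z, toEuclideanLin (borderedMatrix c a M) z⟫_𝕜
      = c * ‖z (Sum.inl ())‖ ^ 2 + 2 * re (conj (z (Sum.inl ())) * ⟪a, lowerPart z⟫_𝕜)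
        + re ⟪lowerPart z, toEuclideanLin M (lowerPart z)⟫_𝕜 := by
  rw [inner_eq_mul_add_inner_lowerPart, toEuclideanLin_borderedMatrix_inl,
    lowerPart_toEuclideanLin_borderedMatrix]
  set x := z (Sum.inl ())
  set y := lowerPart z
  have hcorner : re (conj x * (c * x)) = c * ‖x‖ ^ 2 := by
    rw [mul_left_comm, RCLike.conj_mul]
    norm_cast
  have hcross : re (x * ⟪y, a⟫_𝕜) = re (conj x * ⟪a, y⟫_𝕜) := by
    rw [← RCLike.conj_re, map_mul, inner_conj_symm]
  rw [mul_add, inner_add_right, inner_smul_right, map_add, map_add, map_add, hcorner, hcross]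
  ring

lemma sub_norm_mul_norm_sq_le_re_inner_borderedMatrix {c t : ℝ} (htc : t ≤ c)
    (a : EuclideanSpace 𝕜 n) {M : Matrix n n 𝕜} {z : EuclideanSpace 𝕜 (Unit ⊕ n)}
    (hz : t * ‖lowerPart z‖ ^ 2 ≤ re ⟪lowerPart z, toEuclideanLin M (lowerPart z)⟫_𝕜) :
    (t - ‖a‖) * ‖z‖ ^ 2 ≤ re ⟪z, toEuclideanLin (borderedMatrix c a M) z⟫_𝕜 := by
  have hcorner : t * ‖z (Sum.inl ())‖ ^ 2 ≤ c * ‖z (Sum.inl ())‖ ^ 2 := by gcongr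
  have hcross :=
    neg_norm_mul_add_sq_le_two_mul_re_conj_mul_inner (z (Sum.inl ())) a (lowerPart z)
  rw [norm_sq_eq_add_norm_sq_lowerPart, re_inner_borderedMatrix]
  linarith

lemma toEuclideanLin_eigenvectorBasis {H : Matrix n n 𝕜} (hH : H.IsHermitian) (i : n) :
    toEuclideanLin H (hH.eigenvectorBasis i) = (hH.eigenvalues i : 𝕜) • hH.eigenvectorBasis i := by
  rw [Matrix.toLpLin_apply, hH.mulVec_eigenvectorBasis, RCLike.real_smul_eq_coe_smul (K := 𝕜)]
  rfl

theorem card_eigenvalues_ge_lt_card_eigenvalues_borderedMatrix_ge {c t : ℝ} (htc : t ≤ c)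
    {a : EuclideanSpace 𝕜 n} {M : Matrix n n 𝕜} (hM : M.IsHermitian)
    (hA : (borderedMatrix c a M).IsHermitian) :
    Finset.card {i | t ≤ hM.eigenvalues i} < Finset.card {j | t - ‖a‖ ≤ hA.eigenvalues j} := by
  set V := span 𝕜 (hM.eigenvectorBasis '' {i | t ≤ hM.eigenvalues i})
  have hVdim : finrank 𝕜 V = Finset.card {i | t ≤ hM.eigenvalues i} := by
    rw [← finrank_span_image_eq_card hM.eigenvectorBasis.orthonormal.linearIndependent,
      Finset.coe_filter_univ]
  rw [← Nat.succ_le_iff, ← hVdim, Nat.succ_eq_add_one, ← finrank_comap_lowerPart]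
  refine finrank_le_card_eigenvalues_ge hA.eigenvectorBasis (toEuclideanLin_eigenvectorBasis hA)
    fun z hz => sub_norm_mul_norm_sq_le_re_inner_borderedMatrix htc a ?_
  exact mul_norm_sq_le_re_inner_map_self hM.eigenvectorBasis (toEuclideanLin_eigenvectorBasis hM) hz

theorem bordered_smallest_nonzero_eigenvalue_lower_weyl_general {d : ℕ}
    {M : Matrix n n 𝕜} (hM : M.IsHermitian) {c : ℝ} {a : EuclideanSpace 𝕜 n}
    {μ : Fin d → ℝ} (hμa : Antitone μ) (hμ : ∃ e : Fin d ≃ n, ∀ i, μ i = hM.eigenvalues (e i))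
    (hA : (borderedMatrix c a M).IsHermitian) {ν : Fin (d + 1) → ℝ} (hνa : Antitone ν)
    (hν : ∃ e : Fin (d + 1) ≃ (Unit ⊕ n), ∀ i, ν i = hA.eigenvalues (e i)) (k : Fin d) :
    min c (μ k) - ‖a‖ ≤ ν k.succ := by
  obtain ⟨e, he⟩ := hμ
  obtain ⟨f, hf⟩ := hν
  have hMcard := (le_apply_iff_lt_card_of_antitone hμa he _ k).1 (min_le_right c (μ k))
  have hlt := card_eigenvalues_ge_lt_card_eigenvalues_borderedMatrix_ge (min_le_left c (μ k)) hM hA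
  rw [le_apply_iff_lt_card_of_antitone hνa hf, Fin.val_succ]
  exact (Nat.succ_le_of_lt hMcard).trans_lt hlt

end Bordered

/-- **Weyl-type lower bound on the smallest nonzero eigenvalue after bordering.**
`M ∈ ℂ^{d×d}` is PSD Hermitian of rank `r ≤ d`, with antitone eigenvalue enumeration `μ`
(so `μ (r-1) = λ_r`), and `ν` antitone enumeration of eigenvalues of `A = [[c, a*], [a, M]]`
(so `ν r = λ_{r+1}(A)`). Then `λ_{r+1}(A) ≥ min (c, λ_r) − ‖a‖₂`. -/
theorem bordered_smallest_nonzero_eigenvalue_lower_weyl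
    (d : ℕ) (hd : 0 < d)
    (M : Matrix (Fin d) (Fin d) ℂ) (hM : M.IsHermitian) (hpsd : M.PosSemidef)
    (r : ℕ) (hr1 : 1 ≤ r) (hrd : r ≤ d) (hrank : M.rank = r)
    (c : ℝ) (a : EuclideanSpace ℂ (Fin d))
    (μ : Fin d → ℝ) (hμa : Antitone μ)
    (hμ : ∃ e : Equiv.Perm (Fin d), ∀ i, μ i = hM.eigenvalues (e i))
    (A : Matrix (Unit ⊕ Fin d) (Unit ⊕ Fin d) ℂ)
    (hA : A = Matrix.fromBlocks (Matrix.of fun _ _ => (c : ℂ))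
        (Matrix.of fun _ j => star (a j)) (Matrix.of fun i _ => a i) M)
    (hAh : A.IsHermitian)
    (ν : Fin (d + 1) → ℝ) (hνa : Antitone ν)
    (hν : ∃ e : Fin (d + 1) ≃ (Unit ⊕ Fin d), ∀ i, ν i = hAh.eigenvalues (e i)) :
    ν ⟨r, by omega⟩ ≥ min c (μ ⟨r - 1, by omega⟩) - ‖a‖ := by
  obtain ⟨k, rfl⟩ := Nat.exists_eq_add_of_le' hr1
  subst hA
  exact bordered_smallest_nonzero_eigenvalue_lower_weyl_general hM hμa hμ hAh hνa hν ⟨k, hrd⟩
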